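/- Let M = cQ + εD ∈ 𝔻ℍ[t] be a bounded monic reduced motion polynomial with c ∈ ℝ[t], Q, D ∈ ℍ[t], and mrpf(Q) = 1. Let g ∈ ℝ[t] be the greatest common monic real polynomial divisor of c, D·Q*, and Q*·D. If M admits a factorization into monic linear motion polynomial factors, then c·g divides D·D* in ℝ[t]. -/

import Mathlib

open Polynomial DualNumber TrivSqZeroExt

noncomputable section

/-- The real quaternions. -/
abbrev Hq : Type := Quaternion ℝ

/-- The dual quaternions. -/
abbrev DHq : Type := DualNumber Hq

/-- Conjugation of a dual quaternion: `(p + ε d)* = p* + ε d*`. -/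
instance : Star DHq := ⟨fun x => inl (star x.fst) + inr (star x.snd)⟩

/-- Coefficient-wise (quaternion) conjugation of a polynomial. -/
def cstar {R : Type*} [Semiring R] [Star R] (A : R[X]) : R[X] :=
  A.sum fun n a => Polynomial.C (star a) * Polynomial.X ^ n

/-- The embedding `ℝ[t] → ℍ[t]`. -/
def qPoly (f : ℝ[X]) : Hq[X] := f.map (algebraMap ℝ Hq)

/-- The embedding `ℍ[t] → 𝔻ℍ[t]` (primal part). -/
def dhQ (P : Hq[X]) : DHq[X] := P.map (inlHom Hq Hq)

/-- The embedding `ℝ[t] → 𝔻ℍ[t]`. -/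
def dPoly (f : ℝ[X]) : DHq[X] := dhQ (qPoly f)

/-- The dual quaternion polynomial `P + ε D` with primal part `P` and dual part `D`. -/
def mp (P D : Hq[X]) : DHq[X] := dhQ P + Polynomial.C ε * dhQ D

/-- The primal part of a dual quaternion polynomial. -/
def primal (A : DHq[X]) : Hq[X] := A.map (fstHom ℝ Hq Hq).toRingHom

/-- A motion polynomial: a dual quaternion polynomial whose norm polynomial
`ν(M) = M·M*` is a nonzero real polynomial. -/
def IsMotion (M : DHq[X]) : Prop := ∃ f : ℝ[X], f ≠ 0 ∧ M * cstar M = dPoly f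

/-- A real polynomial divides a quaternion polynomial. -/
def RDvdQ (f : ℝ[X]) (A : Hq[X]) : Prop := ∃ B : Hq[X], A = qPoly f * B

/-- A real polynomial divides a dual quaternion polynomial. -/
def RDvdD (f : ℝ[X]) (A : DHq[X]) : Prop := ∃ B : DHq[X], A = dPoly f * B

/-- `g` is the greatest common monic real polynomial divisor of a quaternion polynomial `A`
(with itself), i.e. `g = mrpf A`. -/
def IsMrpfQ (g : ℝ[X]) (A : Hq[X]) : Prop :=
  g.Monic ∧ RDvdQ g A ∧ ∀ f : ℝ[X], f.Monic → RDvdQ f A → f ∣ g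

/-- `g` is the greatest common monic real polynomial divisor of `c ∈ ℝ[t]` and a quaternion
polynomial `A`, i.e. `g = mrpf(c, A)`. -/
def IsMrpf2 (g : ℝ[X]) (c : ℝ[X]) (A : Hq[X]) : Prop :=
  g.Monic ∧ g ∣ c ∧ RDvdQ g A ∧
    ∀ f : ℝ[X], f.Monic → f ∣ c → RDvdQ f A → f ∣ g

/-- `g` is the greatest common monic real polynomial divisor of `c ∈ ℝ[t]` and two quaternion
polynomials `A` and `B`, i.e. `g = mrpf(c, A, B)`. -/
def IsMrpf3 (g : ℝ[X]) (c : ℝ[X]) (A B : Hq[X]) : Prop :=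
  g.Monic ∧ g ∣ c ∧ RDvdQ g A ∧ RDvdQ g B ∧
    ∀ f : ℝ[X], f.Monic → f ∣ c → RDvdQ f A → RDvdQ f B → f ∣ g

/-- A quaternion polynomial is reduced: `mrpf = 1`, i.e. it has only constant real
polynomial factors. -/
def ReducedQ (A : Hq[X]) : Prop := ∀ f : ℝ[X], f.Monic → RDvdQ f A → f = 1

/-- A dual quaternion polynomial is reduced: `mrpf = 1`. -/
def ReducedD (A : DHq[X]) : Prop := ∀ f : ℝ[X], f.Monic → RDvdD f A → f = 1

/-- Boundedness of a (monic reduced) motion polynomial: `mrpf` of its primal part has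
no real root, equivalently no linear real polynomial `t - a` divides the primal part. -/
def BoundedD (M : DHq[X]) : Prop :=
  ∀ a : ℝ, ¬ RDvdQ (Polynomial.X - Polynomial.C a) (primal M)

/-- A generic motion polynomial: monic, a motion polynomial, with `mrpf` of the primal
part equal to `1`. -/
def GenericD (M : DHq[X]) : Prop :=
  M.Monic ∧ IsMotion M ∧ ReducedQ (primal M)

/-- The monic linear dual quaternion polynomial `t - p - ε d`. -/
def lin (p d : Hq) : DHq[X] := mp (Polynomial.X - Polynomial.C p) (-Polynomial.C d)

/-- `M` admits a factorization into monic linear motion polynomial factors. -/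
def HasLinFact (M : DHq[X]) : Prop :=
  ∃ L : List DHq, (∀ h ∈ L, IsMotion (Polynomial.X - Polynomial.C h)) ∧
    M = (L.map fun h => Polynomial.X - Polynomial.C h).prod

end

/-!
The divisibility of `D·D*` by `c·g` is carried along the factorization, one linear left factor
`t - p - εd` at a time. Boundedness makes `p` non-real. The Study condition `pd = dp*` then yields
`d = xp - px` for some `x`, so `t - p - εd = (1 + εx)(t - p)(1 - εx)`. Multiplication by `1 ± εx`
adds a left multiple of the primal part to the dual part and preserves the divisibility, which
leaves left multiplication of `cQ + εD` by `t - p`, whose norm polynomial `N` is irreducible.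

Real polynomials coprime to `N` can be cancelled against `t - p`. If `t - p*` divides `Q` on the
left, `c` is replaced by `cN`; reducedness of the product excludes `N ∣ g` then. Otherwise `Q`
becomes `(t - p)Q`, and a factor `N` of `g` is split off: the norm of `(t - p)D` provides the
additional `N`, and modulo `N` the quaternion polynomials form a `2 × 2` matrix algebra over a
field, where `t - p` has rank one.
-/

section Conjugation

variable {R : Type*}

theorem coeff_cstar [Semiring R] [StarAddMonoid R] (A : R[X]) (n : ℕ) :
    (cstar A).coeff n = star (A.coeff n) := by
  rw [cstar, sum_def, finsetSum_coeff]
  simp only [coeff_C_mul_X_pow, Finset.sum_ite_eq]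
  split_ifs with hn
  · rfl
  · rw [notMem_support_iff.mp hn, star_zero]

theorem cstar_cstar [Semiring R] [StarAddMonoid R] (A : R[X]) : cstar (cstar A) = A := by
  ext1 n
  simp only [coeff_cstar, star_star]

theorem cstar_add [Semiring R] [StarAddMonoid R] (A B : R[X]) :
    cstar (A + B) = cstar A + cstar B := by
  ext1 n
  simp only [coeff_cstar, coeff_add, star_add]

theorem cstar_mul [Semiring R] [StarRing R] (A B : R[X]) :
    cstar (A * B) = cstar B * cstar A := by
  ext1 n
  rw [coeff_cstar, coeff_mul, coeff_mul, star_sum, ← Finset.Nat.sum_antidiagonal_swap]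
  simp only [star_mul, coeff_cstar, Prod.fst_swap, Prod.snd_swap]

theorem cstar_C [Semiring R] [StarAddMonoid R] (a : R) : cstar (C a) = C (star a) := by
  ext1 n
  rw [coeff_cstar, coeff_C, coeff_C, apply_ite star, star_zero]

theorem cstar_X_sub_C [Ring R] [StarRing R] (a : R) : cstar (X - C a) = X - C (star a) := by
  ext1 n
  rw [coeff_cstar, coeff_sub, coeff_sub, coeff_X, coeff_C, coeff_C, star_sub, apply_ite star,
    apply_ite star, star_one, star_zero]

end Conjugation

section LinearLeftDivisor

variable {R : Type*} [Ring R] [Nontrivial R]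

theorem X_sub_C_dvd_C_iff {p a : R} : X - C p ∣ C a ↔ a = 0 := by
  refine ⟨fun h => ?_, fun h => by simp [h]⟩
  by_contra ha
  exact (monic_X_sub_C p).not_dvd_of_natDegree_lt (C_ne_zero.mpr ha) (by simp) h

theorem exists_eq_X_sub_C_mul_add_C (p : R) (A : R[X]) : ∃ B a, A = (X - C p) * B + C a := by
  have hdeg : (A %ₘ (X - C p)).natDegree = 0 := by
    have := natDegree_modByMonic_lt A (monic_X_sub_C p) 
      (ne_of_apply_ne natDegree (by simp))
    rwa [natDegree_X_sub_C, Nat.lt_one_iff] at this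
  refine ⟨A /ₘ (X - C p), (A %ₘ (X - C p)).coeff 0, ?_⟩
  rw [← eq_C_of_natDegree_eq_zero hdeg, add_comm, modByMonic_add_div]

theorem eq_of_X_sub_C_dvd_C_mul_X_sub_C {p q e : R} (h : X - C p ∣ C e * (X - C q)) :
    p * e = e * q := by
  have hmul : C e * (X - C q) = (X - C p) * C e + C (p * e - e * q) := by
    rw [mul_sub, sub_mul, X_mul_C, C_sub, C_mul, C_mul]
    abel
  rw [hmul, dvd_add_right (dvd_mul_right _ _), X_sub_C_dvd_C_iff] at h
  exact sub_eq_zero.mp h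

end LinearLeftDivisor

section RealFactors

variable {f g : ℝ[X]} {A : Hq[X]}

theorem qPoly_mul (f g : ℝ[X]) : qPoly (f * g) = qPoly f * qPoly g := Polynomial.map_mul _

theorem qPoly_ne_zero (hf : f ≠ 0) : qPoly f ≠ 0 :=
  (Polynomial.map_ne_zero_iff (algebraMap ℝ Hq).injective).mpr hf

theorem qPoly_dvd_qPoly (h : f ∣ g) : qPoly f ∣ qPoly g :=
  map_dvd (mapRingHom (algebraMap ℝ Hq)) h

theorem mul_qPoly (f : ℝ[X]) (A : Hq[X]) : A * qPoly f = qPoly f * A :=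
  letI := Polynomial.algebra ℝ Hq
  (Algebra.commutes f A).symm

theorem mul_qPoly_mul (f : ℝ[X]) (A B : Hq[X]) : A * (qPoly f * B) = qPoly f * (A * B) := by
  rw [← mul_assoc, mul_qPoly, mul_assoc]

theorem qPoly_dvd_mul_left (h : qPoly f ∣ A) (B : Hq[X]) : qPoly f ∣ B * A := by
  obtain ⟨A, rfl⟩ := h
  exact ⟨B * A, mul_qPoly_mul f B A⟩

theorem cstar_qPoly (f : ℝ[X]) : cstar (qPoly f) = qPoly f := by
  ext1 n
  rw [coeff_cstar, qPoly, coeff_map]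
  exact Quaternion.star_coe _

theorem qPoly_dvd_cstar (h : qPoly f ∣ A) : qPoly f ∣ cstar A := by
  obtain ⟨A, rfl⟩ := h
  exact ⟨cstar A, by rw [cstar_mul, cstar_qPoly, mul_qPoly]⟩

theorem qPoly_dvd_of_dvd_qPoly_mul (hfg : IsCoprime f g) (h : qPoly f ∣ qPoly g * A) :
    qPoly f ∣ A := by
  obtain ⟨a, b, hab⟩ := hfg
  have hA : A = qPoly f * (qPoly a * A) + qPoly b * (qPoly g * A) := by
    have hab' : qPoly a * qPoly f + qPoly b * qPoly g = 1 := by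
      simpa [qPoly] using congrArg qPoly hab
    rw [← mul_assoc, ← mul_assoc, ← mul_qPoly f, ← add_mul, hab', one_mul]
  rw [hA]
  exact dvd_add (dvd_mul_right _ _) (qPoly_dvd_mul_left h _)

theorem exists_qPoly_eq_mul_cstar (A : Hq[X]) : ∃ f : ℝ[X], A * cstar A = qPoly f := by
  have hlift : A * cstar A ∈ lifts (algebraMap ℝ Hq) := by
    rw [lifts_iff_coeff_lifts]
    intro n
    have hstar : star ((A * cstar A).coeff n) = (A * cstar A).coeff n := by
      rw [← coeff_cstar, cstar_mul, cstar_cstar]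
    exact ⟨_, (Quaternion.star_eq_self.mp hstar).symm⟩
  obtain ⟨f, hf⟩ := (mem_lifts _).mp hlift
  exact ⟨f, hf.symm⟩

theorem commute_mul_cstar (A B : Hq[X]) : Commute (A * cstar A) B := by
  obtain ⟨f, hf⟩ := exists_qPoly_eq_mul_cstar A
  rw [hf]
  exact (mul_qPoly f B).symm

theorem cstar_mul_self_eq (A : Hq[X]) : cstar A * A = A * cstar A := by
  rcases eq_or_ne A 0 with rfl | hA
  · rw [mul_zero, zero_mul]
  · apply mul_left_cancel₀ hA
    rw [← mul_assoc, (commute_mul_cstar A A).eq]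

end RealFactors

section LinearNorm

/-- The norm polynomial `(t - p)(t - p*) = t² - 2 Re(p) t + |p|²` of the linear quaternion
polynomial `t - p`. -/
noncomputable def linNorm (p : Hq) : ℝ[X] := X ^ 2 - C (2 * p.re) * X + C (Quaternion.normSq p)

theorem linNorm_star (p : Hq) : linNorm (star p) = linNorm p := by
  simp [linNorm]

theorem qPoly_linNorm (p : Hq) : qPoly (linNorm p) = (X - C p) * (X - C (star p)) := by
  have htrace : algebraMap ℝ Hq (2 * p.re) = p + star p := by
    rw [Quaternion.self_add_star, map_mul]
    rfl
  have hnorm : algebraMap ℝ Hq (Quaternion.normSq p) = p * star p := by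
    rw [Quaternion.self_mul_star]
    rfl
  simp only [qPoly, linNorm, Polynomial.map_add, Polynomial.map_sub, Polynomial.map_mul,
    Polynomial.map_pow, map_X, map_C, htrace, hnorm]
  rw [sub_mul, mul_sub, mul_sub, X_mul_C, C_mul, C_add, add_mul, sq]
  abel

theorem qPoly_linNorm' (p : Hq) : qPoly (linNorm p) = (X - C (star p)) * (X - C p) := by
  rw [← linNorm_star, qPoly_linNorm, star_star]

theorem linNorm_monic (p : Hq) : (linNorm p).Monic := by
  unfold linNorm
  monicity!

theorem natDegree_linNorm (p : Hq) : (linNorm p).natDegree = 2 := by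
  unfold linNorm
  compute_degree!

theorem linNorm_ne_one (p : Hq) : linNorm p ≠ 1 := fun h => by
  simpa [h] using natDegree_linNorm p

theorem eval_linNorm (p : Hq) (a : ℝ) :
    (linNorm p).eval a = (a - p.re) ^ 2 + p.imI ^ 2 + p.imJ ^ 2 + p.imK ^ 2 := by
  simp only [linNorm, eval_add, eval_sub, eval_mul, eval_pow, eval_X, eval_C,
    Quaternion.normSq_def']
  ring

theorem irreducible_linNorm {p : Hq} (hp : star p ≠ p) : Irreducible (linNorm p) := by
  rw [(linNorm_monic p).irreducible_iff_roots_eq_zero_of_degree_le_three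
    (natDegree_linNorm p).ge (by rw [natDegree_linNorm]; norm_num),
    Multiset.eq_zero_iff_forall_notMem]
  intro a ha
  have hroot : (a - p.re) ^ 2 + p.imI ^ 2 + p.imJ ^ 2 + p.imK ^ 2 = 0 := by
    rw [← eval_linNorm]
    exact (mem_roots'.mp ha).2
  have hI : p.imI = 0 := by nlinarith
  have hJ : p.imJ = 0 := by nlinarith
  have hK : p.imK = 0 := by nlinarith
  exact hp (by ext <;> simp [hI, hJ, hK])

theorem isCoprime_linNorm {p : Hq} (hp : star p ≠ p) {g : ℝ[X]} (hg : ¬ linNorm p ∣ g) :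
    IsCoprime g (linNorm p) :=
  ((irreducible_linNorm hp).coprime_iff_not_dvd.mpr hg).symm

theorem linNorm_dvd_X_sub_C_mul_iff {p : Hq} {A : Hq[X]} :
    qPoly (linNorm p) ∣ (X - C p) * A ↔ X - C (star p) ∣ A := by
  rw [qPoly_linNorm, mul_dvd_mul_iff_left (X_sub_C_ne_zero p)]

theorem linNorm_dvd_X_sub_C_star_mul_iff {p : Hq} {A : Hq[X]} :
    qPoly (linNorm p) ∣ (X - C (star p)) * A ↔ X - C p ∣ A := by
  rw [qPoly_linNorm', mul_dvd_mul_iff_left (X_sub_C_ne_zero _)]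

theorem X_sub_C_mul_mul_cstar (p : Hq) (A : Hq[X]) :
    (X - C p) * A * cstar ((X - C p) * A) = qPoly (linNorm p) * (A * cstar A) := by
  rw [cstar_mul, cstar_X_sub_C, mul_assoc, ← mul_assoc A, (commute_mul_cstar A _).eq, ← mul_assoc,
    qPoly_linNorm]

variable {p : Hq} {g : ℝ[X]} {A : Hq[X]}

theorem qPoly_dvd_of_dvd_X_sub_C_mul (hg : IsCoprime g (linNorm p))
    (h : qPoly g ∣ (X - C p) * A) : qPoly g ∣ A := by
  refine qPoly_dvd_of_dvd_qPoly_mul hg ?_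
  rw [qPoly_linNorm', mul_assoc]
  exact qPoly_dvd_mul_left h _

theorem qPoly_dvd_of_dvd_mul_X_sub_C (hg : IsCoprime g (linNorm p))
    (h : qPoly g ∣ A * (X - C (star p))) : qPoly g ∣ A := by
  refine qPoly_dvd_of_dvd_qPoly_mul hg ?_
  rw [← mul_qPoly, qPoly_linNorm', ← mul_assoc]
  exact h.mul_right _

end LinearNorm

section Cancellation

variable {p : Hq} {g : ℝ[X]} {A E Q : Hq[X]}

/-- Modulo `linNorm p` the hypotheses make `E` a unit multiple of `X - C (star p)` on either side,
so that `E` and `X - C p` have the same right annihilator. -/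
theorem X_sub_C_star_dvd_of_linNorm_dvd_mul (hleft : qPoly (linNorm p) ∣ (X - C p) * E)
    (hright : qPoly (linNorm p) ∣ E * (X - C (star p))) (hE : ¬ qPoly (linNorm p) ∣ E)
    (hEQ : qPoly (linNorm p) ∣ E * Q) : X - C (star p) ∣ Q := by
  obtain ⟨F, rfl⟩ := linNorm_dvd_X_sub_C_mul_iff.mp hleft
  obtain ⟨S, e, rfl⟩ := exists_eq_X_sub_C_mul_add_C p F
  have he : e ≠ 0 := by
    rintro rfl
    rw [C_0, add_zero, linNorm_dvd_X_sub_C_star_mul_iff] at hE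
    exact hE (dvd_mul_right _ _)
  have dvd_C_mul (B : Hq[X])
      (hB : qPoly (linNorm p) ∣ (X - C (star p)) * ((X - C p) * S + C e) * B) :
      X - C p ∣ C e * B := by
    rwa [mul_assoc, linNorm_dvd_X_sub_C_star_mul_iff, add_mul, mul_assoc,
      dvd_add_right (dvd_mul_right _ _)] at hB
  have hpe : p * e = e * star p := eq_of_X_sub_C_dvd_C_mul_X_sub_C (dvd_C_mul _ hright)
  have hswap : (X - C p) * C e = C e * (X - C (star p)) := by
    rw [sub_mul, mul_sub, X_mul_C, ← C_mul, ← C_mul, hpe]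
  obtain ⟨B, hB⟩ := dvd_C_mul Q hEQ
  refine ⟨C e⁻¹ * B, mul_left_cancel₀ (C_ne_zero.mpr he) ?_⟩
  rw [hB, ← mul_assoc, ← hswap, mul_assoc, ← mul_assoc (C e), ← C_mul, mul_inv_cancel₀ he, C_1,
    one_mul]

theorem linNorm_dvd_of_sq_dvd_sandwich
    (h : qPoly (linNorm p) * qPoly (linNorm p) ∣ (X - C p) * E * (X - C (star p))) :
    qPoly (linNorm p) ∣ (X - C p) * E ∧ qPoly (linNorm p) ∣ E * (X - C (star p)) := by
  have hN : qPoly (linNorm p) ≠ 0 := qPoly_ne_zero (linNorm_monic p).ne_zero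
  constructor <;> rw [← mul_dvd_mul_iff_left hN]
  · rw [← mul_qPoly _ ((X - C p) * E), qPoly_linNorm' p, ← mul_assoc ((X - C p) * E),
      ← qPoly_linNorm']
    exact h.mul_right _
  · rw [← qPoly_mul] at h ⊢
    have := qPoly_dvd_mul_left h (X - C (star p))
    rwa [mul_assoc (X - C p), ← mul_assoc, ← qPoly_linNorm'] at this

theorem qPoly_dvd_of_linNorm_mul_dvd (hp : star p ≠ p) (hg : g ≠ 0) (hQ : ¬ X - C (star p) ∣ Q)
    (hE : qPoly (linNorm p * g) ∣ (X - C p) * E * (X - C (star p))) (hEQ : qPoly g ∣ E * Q) :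
    qPoly g ∣ E := by
  have hN : qPoly (linNorm p) ≠ 0 := qPoly_ne_zero (linNorm_monic p).ne_zero
  obtain ⟨k, r, hr, rfl⟩ := WfDvdMonoid.max_power_factor hg (irreducible_linNorm hp)
  clear hg
  induction k generalizing E with
  | zero =>
    rw [pow_zero, one_mul] at hE ⊢
    have hcop := isCoprime_linNorm hp hr
    exact qPoly_dvd_of_dvd_X_sub_C_mul hcop <| qPoly_dvd_of_dvd_mul_X_sub_C hcop <|
      (qPoly_dvd_qPoly (dvd_mul_left _ _)).trans hE
  | succ k ih =>
    rw [pow_succ', mul_assoc] at hE hEQ ⊢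
    have hEN : qPoly (linNorm p) ∣ E := by
      have hdvd : qPoly (linNorm p) ∣ qPoly (linNorm p * (linNorm p ^ k * r)) :=
        qPoly_dvd_qPoly (dvd_mul_right _ _)
      obtain ⟨hleft, hright⟩ := linNorm_dvd_of_sq_dvd_sandwich
        ((mul_dvd_mul_left _ hdvd).trans (qPoly_mul _ _ ▸ hE))
      by_contra hEN
      exact hQ (X_sub_C_star_dvd_of_linNorm_dvd_mul hleft hright hEN (hdvd.trans hEQ))
    obtain ⟨E, rfl⟩ := hEN
    rw [mul_qPoly_mul, mul_assoc, qPoly_mul, mul_dvd_mul_iff_left hN] at hE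
    rw [mul_assoc, qPoly_mul, mul_dvd_mul_iff_left hN] at hEQ
    rw [qPoly_mul]
    exact mul_dvd_mul_left _ (ih hE hEQ)

theorem linNorm_dvd_of_dvd_cstar_mul (hQ : ¬ X - C p ∣ Q)
    (h : qPoly (linNorm p) ∣ cstar Q * ((X - C p) * A)) : qPoly (linNorm p) ∣ (X - C p) * A := by
  obtain ⟨S, e, rfl⟩ := exists_eq_X_sub_C_mul_add_C p Q
  have he : star e ≠ 0 := by
    rintro he
    rw [star_eq_zero.mp he, C_0, add_zero] at hQ
    exact hQ (dvd_mul_right _ _)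
  have hmul : cstar ((X - C p) * S + C e) * ((X - C p) * A) =
      qPoly (linNorm p) * (cstar S * A) + C (star e) * ((X - C p) * A) := by
    rw [cstar_add, cstar_mul, cstar_X_sub_C, cstar_C, add_mul, ← mul_qPoly_mul, qPoly_linNorm']
    simp only [mul_assoc]
  rw [hmul, dvd_add_right (dvd_mul_right _ _)] at h
  have := qPoly_dvd_mul_left h (C (star e)⁻¹)
  rwa [← mul_assoc, ← C_mul, inv_mul_cancel₀ he, C_1, one_mul] at this

end Cancellation

section NormDvdCondition

variable {P D : Hq[X]}

/-- The necessary condition for factorizability of `P + εD`: if `P = cQ` and `g` is a common real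
divisor of `c`, `D·Q*` and `Q*·D`, then `cg` divides `D·D*`. All decompositions `P = cQ` are
considered, not only the one with `mrpf(Q) = 1`, so that no decomposition has to be tracked when `P`
is multiplied by a linear factor. -/
def NormDvdCondition (P D : Hq[X]) : Prop :=
  ∀ ⦃c g : ℝ[X]⦄ ⦃Q : Hq[X]⦄, P = qPoly c * Q → g ∣ c → qPoly g ∣ D * cstar Q →
    qPoly g ∣ cstar Q * D → qPoly (c * g) ∣ D * cstar D

theorem normDvdCondition_zero_right (P : Hq[X]) : NormDvdCondition P 0 := fun _ _ _ _ _ _ _ => by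
  rw [zero_mul]
  exact dvd_zero _

/-- A common factor of `g` and `Q` can be moved from `g` and `Q` to `c`, which changes neither `cg`
nor `cQ`. -/
theorem NormDvdCondition.of_forall_not_dvd {π : ℝ[X]} (hπ : Irreducible π) (hP : P ≠ 0)
    (h : ∀ ⦃c g : ℝ[X]⦄ ⦃Q : Hq[X]⦄, P = qPoly c * Q → g ∣ c → qPoly g ∣ D * cstar Q →
      qPoly g ∣ cstar Q * D → ¬ (π ∣ g ∧ qPoly π ∣ Q) → qPoly (c * g) ∣ D * cstar D) :
    NormDvdCondition P D := by
  intro c g Q hPQ hgc hleft hright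
  have hg : g ≠ 0 := by
    rintro rfl
    rw [zero_dvd_iff.mp hgc, qPoly, Polynomial.map_zero, zero_mul] at hPQ
    exact hP hPQ
  have hπ0 : qPoly π ≠ 0 := qPoly_ne_zero hπ.ne_zero
  obtain ⟨k, r, hr, rfl⟩ := WfDvdMonoid.max_power_factor hg hπ
  clear hg
  induction k generalizing c Q with
  | zero =>
    rw [pow_zero, one_mul] at *
    exact h hPQ hgc hleft hright fun hπr => hr hπr.1
  | succ k ih =>
    by_cases hπQ : qPoly π ∣ Q
    · obtain ⟨Q, rfl⟩ := hπQ
      rw [pow_succ', mul_assoc] at hgc hleft hright ⊢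
      rw [cstar_mul, cstar_qPoly, mul_qPoly, mul_qPoly_mul, qPoly_mul,
        mul_dvd_mul_iff_left hπ0] at hleft
      rw [cstar_mul, cstar_qPoly, mul_qPoly, mul_assoc, qPoly_mul,
        mul_dvd_mul_iff_left hπ0] at hright
      rw [← mul_assoc]
      refine ih (by rw [hPQ, qPoly_mul, mul_assoc]) ?_ hleft hright
      exact ((dvd_mul_left _ _).trans hgc).mul_right π
    · exact h hPQ hgc hleft hright fun hπg => hπQ hπg.2

theorem NormDvdCondition.add_mul_self (h : NormDvdCondition P D) (A : Hq[X]) :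
    NormDvdCondition P (D + A * P) := by
  rintro c g Q rfl hgc hleft hright
  have hgc' : qPoly g ∣ qPoly c := qPoly_dvd_qPoly hgc
  have hleft' : qPoly g ∣ D * cstar Q := by
    rwa [add_mul, mul_qPoly_mul, mul_assoc,
      dvd_add_left (hgc'.mul_right _)] at hleft
  have hright' : qPoly g ∣ cstar Q * D := by
    rwa [mul_add, mul_qPoly_mul, mul_qPoly_mul,
      dvd_add_left (hgc'.mul_right _)] at hright
  have hright'' : qPoly g ∣ Q * cstar D := by
    simpa only [cstar_mul, cstar_cstar] using qPoly_dvd_cstar hleft'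
  have hexpand : (D + A * (qPoly c * Q)) * cstar (D + A * (qPoly c * Q)) =
      D * cstar D + qPoly c * (D * cstar Q * cstar A + A * (Q * cstar D) +
        qPoly c * (A * Q * (cstar Q * cstar A))) := by
    rw [mul_qPoly_mul, cstar_add, cstar_mul (qPoly c), cstar_qPoly, cstar_mul, mul_qPoly]
    simp only [mul_add, add_mul, mul_assoc, mul_qPoly_mul]
    abel
  rw [hexpand]
  refine dvd_add (h rfl hgc hleft' hright') ?_
  rw [qPoly_mul]
  exact mul_dvd_mul_left _ (dvd_add (dvd_add (hleft'.mul_right _) (qPoly_dvd_mul_left hright'' _))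
    (hgc'.mul_right _))

variable {p : Hq} {c g : ℝ[X]} {Q : Hq[X]}

theorem NormDvdCondition.dvd_of_X_sub_C_dvd (h : NormDvdCondition P D) (hp : star p ≠ p)
    (hP : P ≠ 0) (hPQ : P = qPoly c * Q) (hgc : g ∣ c)
    (hleft : qPoly g ∣ (X - C p) * D * cstar ((X - C p) * Q))
    (hright : qPoly g ∣ cstar ((X - C p) * Q) * ((X - C p) * D))
    (hQ : ¬ (linNorm p ∣ g ∧ X - C (star p) ∣ Q)) :
    qPoly (c * g) ∣ (X - C p) * D * cstar ((X - C p) * D) := by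
  have hN : qPoly (linNorm p) ≠ 0 := qPoly_ne_zero (linNorm_monic p).ne_zero
  rw [cstar_mul, cstar_X_sub_C, ← mul_assoc, mul_assoc (X - C p) D] at hleft
  rw [cstar_mul, cstar_X_sub_C, mul_assoc, ← mul_assoc (X - C (star p)), ← qPoly_linNorm',
    mul_qPoly_mul] at hright
  rw [X_sub_C_mul_mul_cstar]
  by_cases hNg : linNorm p ∣ g
  · obtain ⟨g, rfl⟩ := hNg
    have hg : g ≠ 0 := by
      rintro rfl
      rw [mul_zero, zero_dvd_iff] at hgc
      exact hP (by rw [hPQ, hgc, qPoly, Polynomial.map_zero, zero_mul])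
    rw [qPoly_mul, mul_dvd_mul_iff_left hN] at hright
    have hEQ : qPoly g ∣ D * cstar Q * Q := by
      rw [mul_assoc, cstar_mul_self_eq, ← (commute_mul_cstar Q D).eq, mul_assoc]
      exact qPoly_dvd_mul_left hright Q
    have hleft' : qPoly g ∣ D * cstar Q := qPoly_dvd_of_linNorm_mul_dvd hp hg
      (fun hQ' => hQ ⟨dvd_mul_right _ _, hQ'⟩) hleft hEQ
    rw [mul_left_comm, qPoly_mul]
    exact mul_dvd_mul_left _ (h hPQ ((dvd_mul_left _ _).trans hgc) hleft' hright)
  · have hcop := isCoprime_linNorm hp hNg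
    exact qPoly_dvd_mul_left (h hPQ hgc
      (qPoly_dvd_of_dvd_X_sub_C_mul hcop (qPoly_dvd_of_dvd_mul_X_sub_C hcop hleft))
      (qPoly_dvd_of_dvd_qPoly_mul hcop hright)) _

theorem NormDvdCondition.dvd_of_not_X_sub_C_dvd (h : NormDvdCondition P D) (hp : star p ≠ p)
    (hPQ : (X - C p) * P = qPoly c * Q) (hgc : g ∣ c)
    (hleft : qPoly g ∣ (X - C p) * D * cstar Q) (hright : qPoly g ∣ cstar Q * ((X - C p) * D))
    (hQ : ¬ X - C p ∣ Q)
    (hred : ¬ (qPoly (linNorm p) ∣ (X - C p) * P ∧ qPoly (linNorm p) ∣ (X - C p) * D)) :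
    qPoly (c * g) ∣ (X - C p) * D * cstar ((X - C p) * D) := by
  have hNc : linNorm p ∣ c := by
    by_contra hNc
    refine hQ (linNorm_dvd_X_sub_C_star_mul_iff.mp <|
      qPoly_dvd_of_dvd_qPoly_mul (isCoprime_linNorm hp hNc).symm ⟨P, ?_⟩)
    rw [← mul_qPoly_mul, ← hPQ, ← mul_assoc, qPoly_linNorm']
  have hNg : ¬ linNorm p ∣ g := fun hNg => hred
    ⟨hPQ ▸ (qPoly_dvd_qPoly hNc).mul_right Q,
      linNorm_dvd_of_dvd_cstar_mul hQ ((qPoly_dvd_qPoly hNg).trans hright)⟩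
  have hcop := isCoprime_linNorm hp hNg
  obtain ⟨c, rfl⟩ := hNc
  have hP : P = qPoly c * ((X - C (star p)) * Q) := by
    apply mul_left_cancel₀ (X_sub_C_ne_zero p)
    rw [hPQ, mul_qPoly_mul, ← mul_assoc (X - C p), ← qPoly_linNorm, mul_comm, qPoly_mul,
      mul_assoc]
  have hcstar : cstar ((X - C (star p)) * Q) = cstar Q * (X - C p) := by
    rw [cstar_mul, cstar_X_sub_C, star_star]
  rw [X_sub_C_mul_mul_cstar, mul_assoc, qPoly_mul]
  refine mul_dvd_mul_left _ (h hP (hcop.dvd_of_dvd_mul_left hgc) ?_ ?_)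
  · rw [mul_assoc] at hleft
    rw [hcstar, ← mul_assoc]
    exact (qPoly_dvd_of_dvd_X_sub_C_mul hcop hleft).mul_right _
  · rwa [hcstar, mul_assoc]

theorem NormDvdCondition.X_sub_C_mul (h : NormDvdCondition P D) (hp : star p ≠ p) (hP : P ≠ 0)
    (hred : ¬ (qPoly (linNorm p) ∣ (X - C p) * P ∧ qPoly (linNorm p) ∣ (X - C p) * D)) :
    NormDvdCondition ((X - C p) * P) ((X - C p) * D) := by
  refine .of_forall_not_dvd (irreducible_linNorm hp) (mul_ne_zero (X_sub_C_ne_zero p) hP) ?_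
  intro c g Q hPQ hgc hleft hright hgQ
  by_cases hQ : X - C p ∣ Q
  · obtain ⟨Q, rfl⟩ := hQ
    rw [linNorm_dvd_X_sub_C_mul_iff] at hgQ
    rw [← mul_qPoly_mul, mul_right_inj' (X_sub_C_ne_zero p)] at hPQ
    exact h.dvd_of_X_sub_C_dvd hp hP hPQ hgc hleft hright hgQ
  · exact h.dvd_of_not_X_sub_C_dvd hp hPQ hgc hleft hright hQ hred

/-- If `d = xp - px` then `t - p - εd = (1 + εx)(t - p)(1 - εx)`, and multiplication by `1 ± εx` is
the substitution of `add_mul_self`. -/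
theorem NormDvdCondition.linear_mul {x : Hq} (h : NormDvdCondition P D) (hp : star p ≠ p)
    (hP : P ≠ 0) (hred : ¬ (qPoly (linNorm p) ∣ (X - C p) * P ∧
      qPoly (linNorm p) ∣ (X - C p) * D - C (x * p - p * x) * P)) :
    NormDvdCondition ((X - C p) * P) ((X - C p) * D - C (x * p - p * x) * P) := by
  have hconj : (X - C p) * D - C (x * p - p * x) * P =
      (X - C p) * (D + -C x * P) + C x * ((X - C p) * P) := by
    simp only [C_sub, C_mul, mul_add, sub_mul, mul_sub, neg_mul, mul_neg, mul_assoc]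
    simp only [← mul_assoc, X_mul_C]
    abel
  rw [hconj] at hred ⊢
  refine ((h.add_mul_self _).X_sub_C_mul hp hP fun hdvd => hred ⟨hdvd.1, ?_⟩).add_mul_self _
  exact dvd_add hdvd.2 (qPoly_dvd_mul_left hdvd.1 _)

end NormDvdCondition

section DualQuaternions

variable {P D : Hq[X]} {f : ℝ[X]} {A B : DHq[X]}

theorem fst_star (x : DHq) : (star x).fst = star x.fst := by
  change (inl (star x.fst) + inr (star x.snd) : DHq).fst = _
  simp

theorem snd_star (x : DHq) : (star x).snd = star x.snd := by
  change (inl (star x.fst) + inr (star x.snd) : DHq).snd = _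
  simp

noncomputable instance : StarAddMonoid DHq where
  star_involutive x := by ext1 <;> simp only [fst_star, snd_star, star_star]
  star_add x y := by ext1 <;> simp only [fst_star, snd_star, fst_add, snd_add, star_add]

theorem coeff_mp (P D : Hq[X]) (n : ℕ) : (mp P D).coeff n = inl (P.coeff n) + inr (D.coeff n) := by
  rw [mp, dhQ, dhQ, coeff_add, coeff_C_mul, coeff_map, coeff_map]
  ext1 <;> simp

theorem mp_inj {P' D' : Hq[X]} : mp P D = mp P' D' ↔ P = P' ∧ D = D' := by
  refine ⟨fun h => ?_, fun ⟨hP, hD⟩ => by rw [hP, hD]⟩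
  have hcoeff (n : ℕ) := congrArg (coeff · n) h
  simp only [coeff_mp] at hcoeff
  constructor <;> ext1 n
  · simpa using congrArg TrivSqZeroExt.fst (hcoeff n)
  · simpa using congrArg TrivSqZeroExt.snd (hcoeff n)

theorem primal_mp (P D : Hq[X]) : primal (mp P D) = P := by
  ext1 n
  rw [primal, coeff_map, coeff_mp]
  simp

theorem exists_eq_mp (A : DHq[X]) : ∃ P D, A = mp P D := by
  refine ⟨primal A, ∑ n ∈ A.support, monomial n (A.coeff n).snd, ?_⟩
  ext1 n
  rw [coeff_mp, finsetSum_coeff, primal, coeff_map]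
  simp only [coeff_monomial, Finset.sum_ite_eq']
  ext1
  · split_ifs <;> simp
  · split_ifs with hn
    · simp
    · simp [notMem_support_iff.mp hn]

theorem mp_mul_mp (P D P' D' : Hq[X]) : mp P D * mp P' D' = mp (P * P') (P * D' + D * P') := by
  ext1 n
  simp only [coeff_mp, coeff_mul, coeff_add, ← Finset.sum_add_distrib]
  ext1 <;> simp [fst_sum, snd_sum, -inr_eq_smul_eps]

theorem one_eq_mp : (1 : DHq[X]) = mp 1 0 := by
  simp [mp, dhQ]

theorem dPoly_eq_mp (f : ℝ[X]) : dPoly f = mp (qPoly f) 0 := by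
  simp [mp, dPoly, dhQ]

theorem X_sub_C_eq_mp (h : DHq) : X - C h = mp (X - C h.fst) (-C h.snd) := by
  ext1 n
  simp only [coeff_mp, coeff_sub, coeff_neg, coeff_X, coeff_C]
  split_ifs <;> ext1 <;> simp

theorem cstar_mp (P D : Hq[X]) : cstar (mp P D) = mp (cstar P) (cstar D) := by
  ext1 n
  simp only [coeff_cstar, coeff_mp]
  ext1 <;> simp [fst_star, snd_star]

theorem rDvdD_mp_iff : RDvdD f (mp P D) ↔ qPoly f ∣ P ∧ qPoly f ∣ D := by
  constructor
  · rintro ⟨A, hA⟩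
    obtain ⟨P', D', rfl⟩ := exists_eq_mp A
    rw [dPoly_eq_mp, mp_mul_mp, zero_mul, add_zero, mp_inj] at hA
    exact ⟨⟨P', hA.1⟩, ⟨D', hA.2⟩⟩
  · rintro ⟨⟨P', rfl⟩, ⟨D', rfl⟩⟩
    exact ⟨mp P' D', by rw [dPoly_eq_mp, mp_mul_mp, zero_mul, add_zero]⟩

theorem ReducedD.of_mul_left (h : ReducedD (A * B)) : ReducedD B := by
  intro f hf hB
  obtain ⟨P, D, rfl⟩ := exists_eq_mp A
  obtain ⟨P', D', rfl⟩ := exists_eq_mp B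
  rw [rDvdD_mp_iff] at hB
  refine h f hf ?_
  rw [mp_mul_mp, rDvdD_mp_iff]
  exact ⟨qPoly_dvd_mul_left hB.1 _,
    dvd_add (qPoly_dvd_mul_left hB.2 _) (qPoly_dvd_mul_left hB.1 _)⟩

theorem primal_mul (A B : DHq[X]) : primal (A * B) = primal A * primal B :=
  Polynomial.map_mul _

theorem BoundedD.of_mul_left (h : BoundedD (A * B)) : BoundedD B := by
  intro a ha
  refine h a ?_
  rw [primal_mul]
  exact qPoly_dvd_mul_left ha _

theorem BoundedD.primal_ne_zero (h : BoundedD A) : primal A ≠ 0 := fun hA =>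
  h 0 (hA ▸ dvd_zero _)

theorem BoundedD.star_fst_ne {h : DHq} (hbdd : BoundedD ((X - C h) * A)) :
    star h.fst ≠ h.fst := by
  intro hstar
  refine hbdd h.fst.re ⟨primal A, ?_⟩
  rw [primal_mul, X_sub_C_eq_mp, primal_mp, Quaternion.star_eq_self.mp hstar]
  simp [qPoly]

theorem IsMotion.mul_cstar_add_mul_cstar_eq_zero (h : IsMotion (mp P D)) :
    P * cstar D + D * cstar P = 0 := by
  obtain ⟨f, -, hf⟩ := h
  rw [cstar_mp, mp_mul_mp, dPoly_eq_mp, mp_inj] at hf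
  exact hf.2

theorem IsMotion.fst_mul_snd {h : DHq} (hmotion : IsMotion (X - C h)) :
    h.fst * h.snd = h.snd * star h.fst := by
  rw [X_sub_C_eq_mp] at hmotion
  have hstudy := hmotion.mul_cstar_add_mul_cstar_eq_zero
  rw [neg_mul, add_neg_eq_zero, cstar_X_sub_C] at hstudy
  exact eq_of_X_sub_C_dvd_C_mul_X_sub_C ⟨_, hstudy.symm⟩

theorem exists_eq_commutator {p d : Hq} (hp : star p ≠ p) (hpd : p * d = d * star p) :
    ∃ x, d = x * p - p * x := by
  have hw : p - star p ≠ 0 := sub_ne_zero.mpr hp.symm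
  have hcomm : Commute (p - star p)⁻¹ p := by
    refine ((Commute.refl p).sub_left ?_).inv_left₀
    exact (Quaternion.star_mul_self p).trans (Quaternion.self_mul_star p).symm
  refine ⟨d * (p - star p)⁻¹, ?_⟩
  rw [mul_assoc, hcomm.eq, ← mul_assoc, ← mul_assoc, hpd, ← sub_mul, ← mul_sub, mul_assoc,
    mul_inv_cancel₀ hw, mul_one]

theorem normDvdCondition_of_linear_factors (L : List DHq) (hL : ∀ h ∈ L, IsMotion (X - C h))
    (hfact : mp P D = (L.map fun h => X - C h).prod) (hred : ReducedD (mp P D))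
    (hbdd : BoundedD (mp P D)) : NormDvdCondition P D := by
  induction L generalizing P D with
  | nil =>
    rw [List.map_nil, List.prod_nil, one_eq_mp, mp_inj] at hfact
    rw [hfact.2]
    exact normDvdCondition_zero_right P
  | cons h L ih =>
    rw [List.forall_mem_cons] at hL
    obtain ⟨P', D', htail⟩ := exists_eq_mp (L.map fun h => X - C h).prod
    rw [List.map_cons, List.prod_cons, htail] at hfact
    have hred' := hfact ▸ hred
    have hbdd' := hfact ▸ hbdd
    have hp : star h.fst ≠ h.fst := hbdd'.star_fst_ne
    have hP' : P' ≠ 0 := primal_mp P' D' ▸ hbdd'.of_mul_left.primal_ne_zero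
    obtain ⟨x, hx⟩ := exists_eq_commutator hp hL.1.fst_mul_snd
    rw [X_sub_C_eq_mp, mp_mul_mp, neg_mul, ← sub_eq_add_neg, hx, mp_inj] at hfact
    rw [hfact.1, hfact.2] at hred ⊢
    exact (ih hL.2 htail.symm hred'.of_mul_left hbdd'.of_mul_left).linear_mul hp hP' fun hdvd =>
      linNorm_ne_one _ (hred _ (linNorm_monic _) (rDvdD_mp_iff.mpr hdvd))

end DualQuaternions

theorem final_characterization_necessity_general {c g : ℝ[X]} {Q D : Hq[X]}
    (hred : ReducedD (mp (qPoly c * Q) D)) (hbdd : BoundedD (mp (qPoly c * Q) D)) (hgc : g ∣ c)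
    (hleft : RDvdQ g (D * cstar Q)) (hright : RDvdQ g (cstar Q * D))
    (hfact : HasLinFact (mp (qPoly c * Q) D)) : RDvdQ (c * g) (D * cstar D) := by
  obtain ⟨L, hL, hprod⟩ := hfact
  exact normDvdCondition_of_linear_factors L hL hprod hred hbdd rfl hgc hleft hright

/-- Necessity: if a bounded monic reduced motion polynomial `M = cQ + εD` with reduced `Q`
admits a factorization into monic linear motion polynomial factors then `c·g` divides
`D·D*`. -/
theorem final_characterization_necessity
    (c : ℝ[X]) (Q D : Hq[X]) (g : ℝ[X]) (M : DHq[X])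
    (hM : M = mp (qPoly c * Q) D)
    (hmonic : M.Monic) (hmotion : IsMotion M)
    (hred : ReducedD M) (hbdd : BoundedD M) (hQred : ReducedQ Q)
    (hg : IsMrpf3 g c (D * cstar Q) (cstar Q * D))
    (hfact : HasLinFact M) :
    RDvdQ (c * g) (D * cstar D) := by
  subst hM
  obtain ⟨-, hgc, hleft, hright, -⟩ := hg
  exact final_characterization_necessity_general hred hbdd hgc hleft hright hfact
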